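/- arXiv:1608.08301 — 2 statements merged into one kernel-verified Lean document; each statement's English description precedes it below -/
import Mathlib

section
/- (Quadratic mollification commutator estimate.) Let η ∈ C^∞(ℝⁿ) satisfy ∫_{ℝⁿ} η(h) dh = 1 and suppose that (1 + |h|²) ∇^b η(h) ∈ L¹(ℝⁿ) for every multi-index b, and set η_ε(h) := ε^{−n} η(h/ε) for ε > 0. Then for every multi-index a there is a constant C_{|a|} such that for all bounded f, g ∈ C¹(ℝⁿ) with bounded gradients, ‖∇^a (η_ε ∗ (f g) − (η_ε ∗ f)(η_ε ∗ g))‖_{C⁰(ℝⁿ)} ≤ C_{|a|} ε^{2−|a|} ‖∇f‖_{C⁰(ℝⁿ)} ‖∇g‖_{C⁰(ℝⁿ)}. -/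
/-!
Write `k = η_ε`.  Because `∫ k = 1`, the commutator `k ∗ (fg) − (k ∗ f)(k ∗ g)` does not change when
constants are subtracted from `f` and `g`.  To estimate a derivative at a point `x`, replace `f`, `g`
by `F = f − f(x)`, `G = g − g(x)`, so that `|F(x − h)| ≤ A‖h‖` and `|G(x − h)| ≤ B‖h‖`.

All derivatives can be moved onto the kernel, `∇^a (k ∗ F) = (∇^a k) ∗ F` (`sderM_conv`).  The kernel
derivatives are only known to be integrable, so one cannot dominate difference quotients of `k`;
instead the derivative is first put on the `C¹` function `F`, where domination is trivial, and then
moved to `k` by integration by parts (`conv_deriv`).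

By the Leibniz rule (`sderM_mul`) the derivative at `x` is
`(∇^a k ∗ FG)(x) − ∑ (∇^b k ∗ F)(x) (∇^c k ∗ G)(x)` with `|b| + |c| = |a|`.  Scaling gives
`∫ |∇^b k| ‖h‖^j ≤ ε^{j − |b|} ∫ (1 + ‖h‖²) |∇^b η|` for `j ≤ 2` (`conv_bound`), so every term is
at most a constant times `ε^{2 − |a|} A B`.
-/

open MeasureTheory

noncomputable section

abbrev Vn (n : ℕ) : Type := Fin n → ℝ

/-- spatial partial derivative in direction `i` -/
def sder {n : ℕ} (i : Fin n) (f : Vn n → ℝ) : Vn n → ℝ :=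
  fun x => fderiv ℝ f x (Pi.single i 1)

/-- iterated partial derivative along a multi-index (a list of directions) -/
def sderM {n : ℕ} : List (Fin n) → (Vn n → ℝ) → Vn n → ℝ
  | [], f => f
  | i :: a, f => sder i (sderM a f)

/-- convolution `k ∗ f` on `ℝⁿ` -/
def conv {n : ℕ} (k f : Vn n → ℝ) : Vn n → ℝ := fun x => ∫ h, k h * f (x - h)

/-- rescaled mollifier `η_ε(h) = ε^{−n} η(h/ε)` -/
def moll {n : ℕ} (η : Vn n → ℝ) (ε : ℝ) : Vn n → ℝ :=
  fun h => (ε ^ n)⁻¹ * η (ε⁻¹ • h)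

/-- Bounded `C¹` functions with bounded gradient. -/
structure BddC1 {n : ℕ} (f : Vn n → ℝ) : Prop where
  contDiff : ContDiff ℝ 1 f
  bdd : ∃ M, ∀ x, |f x| ≤ M
  grad : ∃ L, ∀ x, ‖fderiv ℝ f x‖ ≤ L

/-- Smooth kernels all of whose iterated partial derivatives are integrable. -/
structure SmoothL1 {n : ℕ} (k : Vn n → ℝ) : Prop where
  contDiff : ContDiff ℝ (⊤ : ℕ∞) k
  integrable : ∀ b : List (Fin n), Integrable (sderM b k)

/-- All iterated partial derivatives (including the function itself) are differentiable. -/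
def AllDiff {n : ℕ} (U : Vn n → ℝ) : Prop := ∀ b : List (Fin n), Differentiable ℝ (sderM b U)

/-- The ways of distributing a list of directions over the two factors of a product. -/
def splits {n : ℕ} : List (Fin n) → List (List (Fin n) × List (Fin n))
  | [] => [([], [])]
  | i :: a => (splits a).map (fun p => (i :: p.1, p.2)) ++ (splits a).map (fun p => (p.1, i :: p.2))

variable {n : ℕ}

lemma splits_length (a : List (Fin n)) :
    ∀ p ∈ splits a, p.1.length + p.2.length = a.length := by
  induction a with
  | nil => simp [splits]
  | cons i a ih =>
    intro p hp
    simp only [splits, List.mem_append, List.mem_map] at hp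
    rcases hp with ⟨q, hq, rfl⟩ | ⟨q, hq, rfl⟩ <;>
    · have := ih q hq
      simp only [List.length_cons]
      omega

/-! ### Iterated partial derivatives -/

lemma sderM_contDiff {k : Vn n → ℝ} (hk : ContDiff ℝ (⊤ : ℕ∞) k) (b : List (Fin n)) :
    ContDiff ℝ (⊤ : ℕ∞) (sderM b k) := by
  induction b with
  | nil => exact hk
  | cons i b ih =>
    have h1 : ContDiff ℝ (⊤ : ℕ∞) (fderiv ℝ (sderM b k)) := ih.fderiv_right (by simp)
    exact h1.clm_apply contDiff_const

lemma sder_sub (i : Fin n) {U V : Vn n → ℝ} (hU : Differentiable ℝ U) (hV : Differentiable ℝ V) :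
    sder i (fun y => U y - V y) = fun y => sder i U y - sder i V y := by
  funext y
  simp [sder, fderiv_fun_sub (hU y) (hV y)]

lemma sder_mul (i : Fin n) {U V : Vn n → ℝ} (hU : Differentiable ℝ U) (hV : Differentiable ℝ V) :
    sder i (fun y => U y * V y) = fun y => sder i U y * V y + U y * sder i V y := by
  funext y
  simp [sder, fderiv_fun_mul (hU y) (hV y)]
  ring

lemma list_sum_diff {ι : Type*} (φ : ι → Vn n → ℝ) (hφ : ∀ p, Differentiable ℝ (φ p))
    (L : List ι) : Differentiable ℝ (fun y => (L.map (fun p => φ p y)).sum) := by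
  induction L with
  | nil => simp
  | cons p L ih =>
    simp only [List.map_cons, List.sum_cons]
    exact (hφ p).add ih

lemma sder_list_sum {ι : Type*} (i : Fin n) (φ : ι → Vn n → ℝ) (hφ : ∀ p, Differentiable ℝ (φ p))
    (L : List ι) : sder i (fun y => (L.map (fun p => φ p y)).sum) =
      fun y => (L.map (fun p => sder i (φ p) y)).sum := by
  funext y
  induction L with
  | nil => simp [sder]
  | cons p L ih =>
    simp only [List.map_cons, List.sum_cons]
    rw [← ih]
    simp [sder, fderiv_fun_add (hφ p y) (list_sum_diff φ hφ L y)]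

/-- Leibniz rule for iterated partial derivatives. -/
lemma sderM_mul {U V : Vn n → ℝ} (hU : AllDiff U) (hV : AllDiff V) (a : List (Fin n)) :
    sderM a (fun y => U y * V y) =
      fun y => ((splits a).map (fun p => sderM p.1 U y * sderM p.2 V y)).sum := by
  induction a with
  | nil => simp [splits, sderM]
  | cons i a ih =>
    have hd : ∀ p : List (Fin n) × List (Fin n),
        Differentiable ℝ (fun y => sderM p.1 U y * sderM p.2 V y) :=
      fun p => (hU p.1).mul (hV p.2)
    change sder i (sderM a _) = _
    rw [ih, sder_list_sum i _ hd]
    funext y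
    simp only [splits, List.map_append, List.map_map, List.sum_append]
    rw [← List.sum_map_add]
    congr 1
    refine List.map_congr_left fun p _ => ?_
    rw [sder_mul i (hU p.1) (hV p.2)]
    rfl

lemma AllDiff.mul {U V : Vn n → ℝ} (hU : AllDiff U) (hV : AllDiff V) :
    AllDiff (fun y => U y * V y) := by
  intro b
  rw [sderM_mul hU hV]
  exact list_sum_diff (fun p : List (Fin n) × List (Fin n) => fun y => sderM p.1 U y * sderM p.2 V y)
    (fun p => (hU p.1).mul (hV p.2)) _

lemma sderM_sub {U V : Vn n → ℝ} (hU : AllDiff U) (hV : AllDiff V) (a : List (Fin n)) :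
    sderM a (fun y => U y - V y) = fun y => sderM a U y - sderM a V y := by
  induction a with
  | nil => rfl
  | cons i a ih =>
    change sder i (sderM a _) = _
    rw [ih, sder_sub i (hU a) (hV a)]
    rfl

/-! ### Bounded `C¹` functions -/

lemma BddC1.mul {f g : Vn n → ℝ} (hf : BddC1 f) (hg : BddC1 g) : BddC1 (fun x => f x * g x) := by
  obtain ⟨M, hM⟩ := hf.bdd
  obtain ⟨N, hN⟩ := hg.bdd
  obtain ⟨A, hA⟩ := hf.grad
  obtain ⟨B, hB⟩ := hg.grad
  have hM0 : 0 ≤ M := (abs_nonneg _).trans (hM 0)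
  have hN0 : 0 ≤ N := (abs_nonneg _).trans (hN 0)
  refine ⟨hf.contDiff.mul hg.contDiff, ⟨M * N, fun x => ?_⟩, ⟨M * B + N * A, fun x => ?_⟩⟩
  · rw [abs_mul]
    exact mul_le_mul (hM x) (hN x) (abs_nonneg _) hM0
  · rw [fderiv_fun_mul (hf.contDiff.differentiable one_ne_zero x)
      (hg.contDiff.differentiable one_ne_zero x)]
    refine (norm_add_le _ _).trans (add_le_add ?_ ?_)
    · rw [norm_smul]
      exact mul_le_mul (hM x) (hB x) (norm_nonneg _) hM0
    · rw [norm_smul]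
      exact mul_le_mul (hN x) (hA x) (norm_nonneg _) hN0

lemma BddC1.sub_const {f : Vn n → ℝ} (hf : BddC1 f) (c : ℝ) : BddC1 (fun x => f x - c) := by
  obtain ⟨M, hM⟩ := hf.bdd
  obtain ⟨A, hA⟩ := hf.grad
  refine ⟨hf.contDiff.sub contDiff_const, ⟨M + |c|, fun x => ?_⟩, ⟨A, fun x => ?_⟩⟩
  · exact (abs_sub _ _).trans (add_le_add (hM x) le_rfl)
  · rw [fderiv_sub_const]
    exact hA x

lemma BddC1.integrable_mul {k f : Vn n → ℝ} (hk : Integrable k) (hf : BddC1 f) (x : Vn n) :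
    Integrable (fun h => k h * f (x - h)) := by
  obtain ⟨M, hM⟩ := hf.bdd
  have := hf.contDiff.continuous
  exact hk.mul_bdd (c := M) (by fun_prop : Continuous fun h => f (x - h)).aestronglyMeasurable
    (Filter.Eventually.of_forall fun h => hM _)

/-! ### Derivatives of convolutions -/

/-- The derivative of `k ∗ f` falls on `f` by dominated convergence (`∇f` is bounded and `k` is
integrable), and then on `k` by integration by parts. -/
lemma conv_deriv {k f : Vn n → ℝ} (hkd : Differentiable ℝ k) (hk : Integrable k)
    (hk' : ∀ i, Integrable (sder i k)) (hf : BddC1 f) :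
    Differentiable ℝ (conv k f) ∧ ∀ i, sder i (conv k f) = conv (sder i k) f := by
  obtain ⟨L, hL⟩ := hf.grad
  have hfd : Differentiable ℝ f := hf.contDiff.differentiable one_ne_zero
  have hfc : Continuous f := hf.contDiff.continuous
  have hfc' : Continuous (fderiv ℝ f) := hf.contDiff.continuous_fderiv one_ne_zero
  have hmeas : ∀ x, AEStronglyMeasurable (fun h => k h • fderiv ℝ f (x - h)) := fun x =>
    hk.aestronglyMeasurable.smul
      (by fun_prop : Continuous fun h => fderiv ℝ f (x - h)).aestronglyMeasurable
  have hbd : ∀ x h, ‖k h • fderiv ℝ f (x - h)‖ ≤ ‖k h‖ * L := fun x h => by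
    rw [norm_smul]
    exact mul_le_mul_of_nonneg_left (hL _) (norm_nonneg _)
  have hder : ∀ x, HasFDerivAt (conv k f) (∫ h, k h • fderiv ℝ f (x - h)) x := by
    intro x
    refine hasFDerivAt_integral_of_dominated_of_fderiv_le (𝕜 := ℝ)
      (F := fun x h => k h * f (x - h)) (F' := fun x h => k h • fderiv ℝ f (x - h))
      (bound := fun h => ‖k h‖ * L) (s := Set.univ) Filter.univ_mem
      (Filter.Eventually.of_forall fun y => (hf.integrable_mul hk y).aestronglyMeasurable)
      (hf.integrable_mul hk x) (hmeas x)
      (Filter.Eventually.of_forall fun h y _ => hbd y h) (hk.norm.mul_const L)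
      (Filter.Eventually.of_forall fun h y _ => ?_)
    have h1 : HasFDerivAt (fun y => f (y - h)) (fderiv ℝ f (y - h)) y :=
      by
      simpa [Function.comp_def] using (hfd (y - h)).hasFDerivAt.comp y ((hasFDerivAt_id y).sub_const h)
    exact h1.const_mul (k h)
  refine ⟨fun x => (hder x).differentiableAt, fun i => ?_⟩
  funext x
  have hint : Integrable (fun h => k h • fderiv ℝ f (x - h)) :=
    (hk.norm.mul_const L).mono' (hmeas x) (Filter.Eventually.of_forall (hbd x))
  have hcomp : ∀ h, fderiv ℝ (fun h => f (x - h)) h = - fderiv ℝ f (x - h) := fun h => by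
    have h1 : HasFDerivAt (fun h => f (x - h)) (- fderiv ℝ f (x - h)) h := by
      simpa [Function.comp_def] using (hfd (x - h)).hasFDerivAt.comp h ((hasFDerivAt_id h).const_sub x)
    exact h1.fderiv
  have happ : Integrable (fun h => k h * fderiv ℝ f (x - h) (Pi.single i 1)) := by
    simpa using hint.apply_continuousLinearMap (Pi.single i 1)
  have hparts := integral_mul_fderiv_eq_neg_fderiv_mul_of_integrable (μ := volume) (f := k)
    (g := fun h => f (x - h)) (v := Pi.single i (1 : ℝ))
    (hf.integrable_mul (hk' i) x) (by simpa [hcomp] using happ.neg)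
    (hf.integrable_mul hk x) (fun h _ => hkd h) (fun h _ => by fun_prop)
  simp only [hcomp, neg_apply, mul_neg, integral_neg, neg_inj] at hparts
  change fderiv ℝ (conv k f) x _ = _
  rw [(hder x).fderiv, ContinuousLinearMap.integral_apply hint]
  simpa [conv, sder] using hparts

lemma sderM_conv {k f : Vn n → ℝ} (hk : SmoothL1 k) (hf : BddC1 f) (a : List (Fin n)) :
    sderM a (conv k f) = conv (sderM a k) f := by
  induction a with
  | nil => rfl
  | cons i a ih =>
    change sder i (sderM a _) = _
    rw [ih]
    exact (conv_deriv ((sderM_contDiff hk.contDiff a).differentiable (by simp))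
      (hk.integrable a) (fun j => hk.integrable (j :: a)) hf).2 i

lemma allDiff_conv {k f : Vn n → ℝ} (hk : SmoothL1 k) (hf : BddC1 f) : AllDiff (conv k f) := by
  intro a
  rw [sderM_conv hk hf]
  exact (conv_deriv ((sderM_contDiff hk.contDiff a).differentiable (by simp))
      (hk.integrable a) (fun j => hk.integrable (j :: a)) hf).1

/-- The commutator is invariant under subtracting constants from `f` and `g`. -/
lemma commutator_shift {k f g : Vn n → ℝ} (hk : Integrable k) (hk1 : ∫ h, k h = 1)
    (hf : BddC1 f) (hg : BddC1 g) (c d : ℝ) (y : Vn n) :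
    conv k (fun z => f z * g z) y - conv k f y * conv k g y =
      conv k (fun z => (f z - c) * (g z - d)) y -
        conv k (fun z => f z - c) y * conv k (fun z => g z - d) y := by
  have hF := hf.integrable_mul hk y
  have hG := hg.integrable_mul hk y
  have hFG := (hf.mul hg).integrable_mul hk y
  have e1 : conv k (fun z => f z - c) y = conv k f y - c := by
    simp only [conv, mul_sub]
    rw [integral_sub hF (hk.mul_const c), integral_mul_const, hk1, one_mul]
  have e2 : conv k (fun z => g z - d) y = conv k g y - d := by
    simp only [conv, mul_sub]
    rw [integral_sub hG (hk.mul_const d), integral_mul_const, hk1, one_mul]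
  have e3 : conv k (fun z => (f z - c) * (g z - d)) y =
      conv k (fun z => f z * g z) y - d * conv k f y - c * conv k g y + c * d := by
    have : ∀ h, k h * ((f (y - h) - c) * (g (y - h) - d)) =
        k h * (f (y - h) * g (y - h)) - d * (k h * f (y - h)) - c * (k h * g (y - h))
          + k h * (c * d) := fun h => by ring
    simp only [conv, this]
    have i1 : Integrable (fun h => k h * (f (y - h) * g (y - h)) - d * (k h * f (y - h))) :=
      hFG.sub (hF.const_mul d)
    have i2 : Integrable (fun h => k h * (f (y - h) * g (y - h)) - d * (k h * f (y - h))
        - c * (k h * g (y - h))) := i1.sub (hG.const_mul c)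
    rw [integral_add i2 (hk.mul_const _), integral_sub i1 (hG.const_mul c),
      integral_sub hFG (hF.const_mul d), integral_mul_const, hk1, integral_const_mul,
      integral_const_mul, one_mul]
  rw [e1, e2, e3]
  ring

/-! ### Scaling of the mollifier -/

lemma sderM_moll {η : Vn n → ℝ} (hη : ContDiff ℝ (⊤ : ℕ∞) η) (ε : ℝ) (b : List (Fin n)) :
    sderM b (moll η ε) =
      fun h => (ε ^ n)⁻¹ * (ε ^ b.length)⁻¹ * sderM b η (ε⁻¹ • h) := by
  induction b with
  | nil =>
    funext h
    simp [sderM, moll]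
  | cons i b ih =>
    change sder i (sderM b _) = _
    rw [ih]
    funext h
    have hd : Differentiable ℝ (sderM b η) :=
      (sderM_contDiff hη b).differentiable (by simp)
    have hd' : DifferentiableAt ℝ (fun h => sderM b η (ε⁻¹ • h)) h := by fun_prop
    simp only [sder]
    rw [fderiv_const_mul hd', fderiv_comp_smul]
    simp only [sderM, sder, smul_apply, smul_eq_mul, List.length_cons,
      pow_succ, mul_inv]
    ring

lemma integrable_of_weighted {u : Vn n → ℝ} (hu : Continuous u)
    (h : Integrable fun h : Vn n => (1 + ‖h‖ ^ 2) * u h) : Integrable u := by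
  refine h.mono hu.aestronglyMeasurable (Filter.Eventually.of_forall fun x => ?_)
  rw [norm_mul]
  refine le_mul_of_one_le_left (norm_nonneg _) ?_
  rw [Real.norm_eq_abs]
  refine le_trans ?_ (le_abs_self _)
  nlinarith [sq_nonneg ‖x‖]

lemma smoothL1_moll {η : Vn n → ℝ} (hη : ContDiff ℝ (⊤ : ℕ∞) η)
    (hint : ∀ b : List (Fin n), Integrable fun h : Vn n => (1 + ‖h‖ ^ 2) * sderM b η h)
    {ε : ℝ} (hε : 0 < ε) : SmoothL1 (moll η ε) := by
  refine ⟨contDiff_const.mul (hη.comp (contDiff_const_smul _)), fun b => ?_⟩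
  rw [sderM_moll hη]
  exact ((integrable_of_weighted (sderM_contDiff hη b).continuous (hint b)).comp_smul
    (inv_ne_zero hε.ne')).const_mul _

lemma integral_moll {η : Vn n → ℝ} (hnorm : ∫ h, η h = 1) {ε : ℝ} (hε : 0 < ε) :
    ∫ h, moll η ε h = 1 := by
  simp only [moll]
  rw [integral_const_mul, Measure.integral_comp_inv_smul_of_nonneg volume η hε.le, hnorm]
  simp [hε.ne']

/-- If `|F(x − h)| ≤ A‖h‖^j` with `j ≤ 2`, then `(∇^b η_ε ∗ F)(x)` is of size `ε^{j − |b|}`; the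
weight `‖h‖^j` is absorbed into `1 + ‖h‖²` after rescaling. -/
lemma conv_bound {η : Vn n → ℝ} (hη : ContDiff ℝ (⊤ : ℕ∞) η)
    (hint : ∀ b : List (Fin n), Integrable fun h : Vn n => (1 + ‖h‖ ^ 2) * sderM b η h)
    {ε : ℝ} (hε : 0 < ε) (b : List (Fin n)) {j : ℕ} (hj : j ≤ 2) {F : Vn n → ℝ} {A : ℝ}
    (hA : 0 ≤ A) (x : Vn n) (hF : ∀ h, |F (x - h)| ≤ A * ‖h‖ ^ j) :
    |conv (sderM b (moll η ε)) F x| ≤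
      (∫ h, ‖(1 + ‖h‖ ^ 2) * sderM b η h‖) * (ε ^ j * (ε ^ b.length)⁻¹) * A := by
  set Φ : Vn n → ℝ := fun h => ‖(1 + ‖h‖ ^ 2) * sderM b η h‖ with hΦ
  have hΦi : Integrable Φ := (hint b).norm
  set c : ℝ := (ε ^ n)⁻¹ * (ε ^ b.length)⁻¹ * (A * ε ^ j) with hc
  have key : ∀ h, ‖sderM b (moll η ε) h * F (x - h)‖ ≤ c * Φ (ε⁻¹ • h) := by
    intro h
    have hs : ‖h‖ = ε * ‖ε⁻¹ • h‖ := by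
      rw [norm_smul, norm_inv, Real.norm_of_nonneg hε.le, mul_inv_cancel_left₀ hε.ne']
    have hw : ‖ε⁻¹ • h‖ ^ j ≤ 1 + ‖ε⁻¹ • h‖ ^ 2 := by
      set t := ‖ε⁻¹ • h‖
      interval_cases j <;> nlinarith [sq_nonneg t, sq_nonneg (t - 1)]
    have hw0 : 0 ≤ 1 + ‖ε⁻¹ • h‖ ^ 2 := by positivity
    have hpos : 0 ≤ (ε ^ n)⁻¹ * (ε ^ b.length)⁻¹ := by positivity
    have h1 : |F (x - h)| ≤ (A * ε ^ j) * (1 + ‖ε⁻¹ • h‖ ^ 2) := by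
      refine (hF h).trans ?_
      rw [hs, mul_pow, ← mul_assoc]
      exact mul_le_mul_of_nonneg_left hw (by positivity)
    rw [sderM_moll hη, hΦ]
    simp only [norm_mul, Real.norm_eq_abs, abs_of_nonneg hw0, hc]
    rw [abs_of_nonneg (by positivity : 0 ≤ (ε ^ n)⁻¹),
      abs_of_nonneg (by positivity : 0 ≤ (ε ^ b.length)⁻¹)]
    calc (ε ^ n)⁻¹ * (ε ^ b.length)⁻¹ * |sderM b η (ε⁻¹ • h)| * |F (x - h)|
        ≤ (ε ^ n)⁻¹ * (ε ^ b.length)⁻¹ * |sderM b η (ε⁻¹ • h)| *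
          ((A * ε ^ j) * (1 + ‖ε⁻¹ • h‖ ^ 2)) := mul_le_mul_of_nonneg_left h1 (by positivity)
      _ = _ := by ring
  have hb := norm_integral_le_of_norm_le
    ((hΦi.comp_smul (inv_ne_zero hε.ne')).const_mul c) (Filter.Eventually.of_forall key)
  rw [integral_const_mul, Measure.integral_comp_inv_smul_of_nonneg volume Φ hε.le] at hb
  refine hb.trans (le_of_eq ?_)
  simp only [Module.finrank_fintype_fun_eq_card, Fintype.card_fin, smul_eq_mul, hc]
  have : ε ^ n ≠ 0 := (pow_pos hε n).ne'
  field_simp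

lemma lip_of_grad {f : Vn n → ℝ} (hf : ContDiff ℝ 1 f) {A : ℝ} (hA : ∀ x, ‖fderiv ℝ f x‖ ≤ A)
    (x h : Vn n) : |f (x - h) - f x| ≤ A * ‖h‖ := by
  have := convex_univ.norm_image_sub_le_of_norm_fderiv_le (𝕜 := ℝ) (f := f) (C := A)
    (fun y _ => hf.differentiable one_ne_zero y) (fun y _ => hA y) (Set.mem_univ x)
    (Set.mem_univ (x - h))
  simpa using this

lemma abs_list_sum_le {ι : Type*} (L : List ι) (u v : ι → ℝ) (K : ℝ)
    (h : ∀ p ∈ L, |u p| ≤ v p * K) : |(L.map u).sum| ≤ (L.map v).sum * K := by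
  induction L with
  | nil => simp
  | cons p L ih =>
    simp only [List.map_cons, List.sum_cons, add_mul]
    exact (abs_add_le _ _).trans (add_le_add (h p (by simp))
      (ih fun q hq => h q (List.mem_cons_of_mem _ hq)))

/-- **Quadratic mollification commutator estimate.** -/
theorem mollification_commutator (n : ℕ) (η : Vn n → ℝ)
    (hsm : ContDiff ℝ (⊤ : ℕ∞) η)
    (hnorm : (∫ h, η h) = 1)
    (hint : ∀ b : List (Fin n), Integrable fun h : Vn n => (1 + ‖h‖ ^ 2) * sderM b η h) :
    ∀ a : List (Fin n), ∃ C : ℝ, 0 ≤ C ∧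
      ∀ ε : ℝ, 0 < ε →
        ∀ f g : Vn n → ℝ, ContDiff ℝ 1 f → ContDiff ℝ 1 g →
          (∃ Mf, ∀ x, |f x| ≤ Mf) → (∃ Mg, ∀ x, |g x| ≤ Mg) →
          ∀ A B : ℝ, (∀ x, ‖fderiv ℝ f x‖ ≤ A) → (∀ x, ‖fderiv ℝ g x‖ ≤ B) →
            ∀ x, |sderM a (fun y =>
                conv (moll η ε) (fun z => f z * g z) y -
                  conv (moll η ε) f y * conv (moll η ε) g y) x| ≤
              C * ε ^ ((2 : ℝ) - a.length) * A * B := by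
  intro a
  set M : List (Fin n) → ℝ := fun b => ∫ h, ‖(1 + ‖h‖ ^ 2) * sderM b η h‖ with hM
  have hM0 : ∀ b, 0 ≤ M b := fun b => integral_nonneg fun h => norm_nonneg _
  refine ⟨M a + ((splits a).map fun p => M p.1 * M p.2).sum, ?_, ?_⟩
  · refine add_nonneg (hM0 a) (List.sum_nonneg fun r hr => ?_)
    obtain ⟨p, _, rfl⟩ := List.mem_map.1 hr
    exact mul_nonneg (hM0 _) (hM0 _)
  intro ε hε f g hf hg hfb hgb A B hA hB x
  have hA0 : 0 ≤ A := (norm_nonneg _).trans (hA 0)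
  have hB0 : 0 ≤ B := (norm_nonneg _).trans (hB 0)
  have hf1 : BddC1 f := ⟨hf, hfb, A, hA⟩
  have hg1 : BddC1 g := ⟨hg, hgb, B, hB⟩
  have hk := smoothL1_moll hsm hint hε
  have hF := hf1.sub_const (f x)
  have hG := hg1.sub_const (g x)
  have hlF := lip_of_grad hf hA x
  have hlG := lip_of_grad hg hB x
  rw [funext (commutator_shift (k := moll η ε) (hk.integrable []) (integral_moll hnorm hε) hf1 hg1 (f x) (g x)),
    sderM_sub (allDiff_conv hk (hF.mul hG)) ((allDiff_conv hk hF).mul (allDiff_conv hk hG)),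
    sderM_mul (allDiff_conv hk hF) (allDiff_conv hk hG)]
  simp only [sderM_conv hk (hF.mul hG), sderM_conv hk hF, sderM_conv hk hG]
  have hpow : ε ^ ((2 : ℝ) - a.length) = ε ^ 2 * (ε ^ a.length)⁻¹ := by
    rw [Real.rpow_sub hε, Real.rpow_natCast, div_eq_mul_inv]
    norm_num
  have h1 : |conv (sderM a (moll η ε)) (fun z => (f z - f x) * (g z - g x)) x| ≤
      M a * (ε ^ 2 * (ε ^ a.length)⁻¹ * (A * B)) := by
    refine (conv_bound hsm hint hε a le_rfl (mul_nonneg hA0 hB0) x fun h => ?_).trans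
      (le_of_eq (by rw [mul_assoc]))
    rw [abs_mul]
    refine (mul_le_mul (hlF h) (hlG h) (abs_nonneg _) (by positivity)).trans (le_of_eq (by ring))
  have h2 := abs_list_sum_le (splits a)
    (fun p => conv (sderM p.1 (moll η ε)) (fun z => f z - f x) x *
      conv (sderM p.2 (moll η ε)) (fun z => g z - g x) x)
    (fun p => M p.1 * M p.2) (ε ^ 2 * (ε ^ a.length)⁻¹ * (A * B)) (fun p hp => by
      have b1 := conv_bound hsm hint hε p.1 one_le_two hA0 x (F := fun z => f z - f x)
        (fun h => by simpa using hlF h)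
      have b2 := conv_bound hsm hint hε p.2 one_le_two hB0 x (F := fun z => g z - g x)
        (fun h => by simpa using hlG h)
      rw [abs_mul, ← splits_length a p hp]
      refine (mul_le_mul b1 b2 (abs_nonneg _) ((abs_nonneg _).trans b1)).trans (le_of_eq ?_)
      rw [pow_add, mul_inv]
      ring)
  refine (abs_sub _ _).trans ((add_le_add h1 h2).trans (le_of_eq ?_))
  rw [hpow]
  ring

end
end

section
/- (Disjoint pipe neighborhoods.) Let F = {e_i + e_j : 1 ≤ i < j ≤ 3} ∪ {e_i − e_j : 1 ≤ i < j ≤ 3} ⊆ ℤ³. There exist points (p_f)_{f∈F} in 𝕋³ and a number r₀ > 0 such that, denoting by ℓ_f = {p_f + t f : t ∈ ℝ} ⊆ 𝕋³ the periodization of the line through p_f in direction f and by N_δ(ℓ_f) its closed δ-neighborhood in 𝕋³, the sets N_{3r₀}(ℓ_f), f ∈ F, are pairwise disjoint. -/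
/-!
For `f ≠ f'` in `F` the integer vector `n = f × f'` is orthogonal to both directions, so `n · y` is
constant modulo `1` on each of the two periodized lines. The lines therefore stay apart as soon as
`n · (p_f - p_f')` is not an integer, and quantitatively so because `|n₀| + |n₁| + |n₂| ≤ 3`.

The base points are `p_f = ((1, 3, 9) · f / 23) (1, 2, 4)`. Then `23 n · (p_f - p_f')` is the product
of `(1, 3, 9) · (f - f')`, a difference of two of the distinct values `4, -2, 10, -8, 12, -6`, hence
nonzero of absolute value at most `20`, and of `n · (1, 2, 4)`, which is nonzero of absolute value at most `8`.
As `23` is prime, the product is not divisible by `23`; so `n · y` differs by at least `1 / 23`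
between the two lines, whereas points of intersecting `3r₀`-neighborhoods would make it differ by at
most `18 r₀`. The choice `r₀ = 1 / 1000` works.
-/

noncomputable section

abbrev V3 : Type := Fin 3 → ℝ

/-- the `i`-th standard basis vector of `ℝ³` -/
def stdv (i : Fin 3) : V3 := Pi.single i 1

/-- the six directions `e_i ± e_j`, `1 ≤ i < j ≤ 3` -/
def Fdirs : Set V3 :=
  {g | ∃ i j : Fin 3, i < j ∧ (g = stdv i + stdv j ∨ g = stdv i - stdv j)}

/-- the periodization of the line through `p` in direction `f`, viewed as the
`ℤ³`-saturated subset of `ℝ³` representing a subset of `𝕋³` -/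
def pipeLine (p f : V3) : Set V3 :=
  {y | ∃ (t : ℝ) (ℓ : Fin 3 → ℤ), y = p + t • f + fun i => (ℓ i : ℝ)}

/-- the closed `δ`-neighborhood of a set -/
def nbhdOf (A : Set V3) (δ : ℝ) : Set V3 := {z | ∃ y ∈ A, ‖z - y‖ ≤ δ}

/-- The six directions `e_i ± e_j`, `i < j`, as integer vectors. -/
def intDirs : List (ℤ × ℤ × ℤ) :=
  [(1, 1, 0), (1, -1, 0), (1, 0, 1), (1, 0, -1), (0, 1, 1), (0, 1, -1)]

/-- The real vector with the given integer coordinates. -/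
def toV3 (a : ℤ × ℤ × ℤ) : V3 := ![(a.1 : ℝ), (a.2.1 : ℝ), (a.2.2 : ℝ)]

/-- The cross product on `ℤ³`. -/
def intCross (a b : ℤ × ℤ × ℤ) : ℤ × ℤ × ℤ :=
  (a.2.1 * b.2.2 - a.2.2 * b.2.1, a.2.2 * b.1 - a.1 * b.2.2, a.1 * b.2.1 - a.2.1 * b.1)

/-- The base point `((1, 3, 9) · f / 23) (1, 2, 4)` of the line with direction `f`. -/
def basePt (f : V3) : V3 := ((f 0 + 3 * f 1 + 9 * f 2) / 23) • ![1, 2, 4]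

lemma exists_intDirs_of_mem_Fdirs {f : V3} (hf : f ∈ Fdirs) : ∃ a ∈ intDirs, f = toV3 a := by
  obtain ⟨i, j, hij, h⟩ := hf
  fin_cases i <;> fin_cases j <;> simp at hij <;> rcases h with rfl | rfl
  · exact ⟨(1, 1, 0), by decide, by ext k; fin_cases k <;> simp [stdv, toV3]⟩
  · exact ⟨(1, -1, 0), by decide, by ext k; fin_cases k <;> simp [stdv, toV3]⟩
  · exact ⟨(1, 0, 1), by decide, by ext k; fin_cases k <;> simp [stdv, toV3]⟩
  · exact ⟨(1, 0, -1), by decide, by ext k; fin_cases k <;> simp [stdv, toV3]⟩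
  · exact ⟨(0, 1, 1), by decide, by ext k; fin_cases k <;> simp [stdv, toV3]⟩
  · exact ⟨(0, 1, -1), by decide, by ext k; fin_cases k <;> simp [stdv, toV3]⟩

/-- The arithmetic input: the normal `a × b` has `ℓ¹`-norm at most `3`, and
`23 (a × b) · (p_a - p_b)` is not divisible by `23`. -/
lemma intCross_intDirs : ∀ a ∈ intDirs, ∀ b ∈ intDirs, a ≠ b →
    |(intCross a b).1| + |(intCross a b).2.1| + |(intCross a b).2.2| ≤ 3 ∧
    ¬ (23 : ℤ) ∣ ((a.1 - b.1) + 3 * (a.2.1 - b.2.1) + 9 * (a.2.2 - b.2.2)) *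
      ((intCross a b).1 + 2 * (intCross a b).2.1 + 4 * (intCross a b).2.2) := by
  decide

/-- Integers congruent modulo `23` to a non-multiple of `23` have absolute value at least `1`. -/
lemma one_le_abs_add_mul {K : ℤ} (hK : ¬ (23 : ℤ) ∣ K) (M : ℤ) : (1 : ℝ) ≤ |(K : ℝ) + 23 * M| := by
  have h : K + 23 * M ≠ 0 := by omega
  exact_mod_cast Int.one_le_abs h

/-- **Disjoint pipe neighborhoods**: one can place the six periodized lines with
directions in `F` so that their `3r₀`-neighborhoods are pairwise disjoint. -/
theorem disjoint_pipe_neighborhoods :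
    ∃ (p : V3 → V3) (r₀ : ℝ), 0 < r₀ ∧
      ∀ f ∈ Fdirs, ∀ f' ∈ Fdirs, f ≠ f' →
        Disjoint (nbhdOf (pipeLine (p f) f) (3 * r₀))
          (nbhdOf (pipeLine (p f') f') (3 * r₀)) := by
  refine ⟨basePt, 1 / 1000, by norm_num, ?_⟩
  intro f hf f' hf' hne
  obtain ⟨a, ha, rfl⟩ := exists_intDirs_of_mem_Fdirs hf
  obtain ⟨b, hb, rfl⟩ := exists_intDirs_of_mem_Fdirs hf'
  have hab : a ≠ b := fun h => hne (by rw [h])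
  obtain ⟨hn, hK⟩ := intCross_intDirs a ha b hb hab
  rw [Set.disjoint_left]
  rintro z ⟨y, ⟨t, l, hy⟩, hzy⟩ ⟨y', ⟨t', m, hy'⟩, hzy'⟩
  have hd : ∀ i, |y i - y' i| ≤ 6 / 1000 := by
    intro i
    have h1 := (norm_le_pi_norm (z - y) i).trans hzy
    have h2 := (norm_le_pi_norm (z - y') i).trans hzy'
    rw [Real.norm_eq_abs, Pi.sub_apply, abs_le] at h1 h2
    rw [abs_le]
    constructor <;> linarith [h1.1, h1.2, h2.1, h2.2]
  set n := intCross a b with hndef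
  have hsep := one_le_abs_add_mul hK
    (n.1 * (l 0 - m 0) + n.2.1 * (l 1 - m 1) + n.2.2 * (l 2 - m 2))
  -- Both directions are orthogonal to `n`, so `t` and `t'` drop out of `n · (y - y')`.
  have hkey : (((((a.1 - b.1) + 3 * (a.2.1 - b.2.1) + 9 * (a.2.2 - b.2.2)) *
      (n.1 + 2 * n.2.1 + 4 * n.2.2) : ℤ) : ℝ) +
      23 * ((n.1 * (l 0 - m 0) + n.2.1 * (l 1 - m 1) + n.2.2 * (l 2 - m 2) : ℤ) : ℝ)) =
      23 * (n.1 * (y 0 - y' 0) + n.2.1 * (y 1 - y' 1) + n.2.2 * (y 2 - y' 2)) := by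
    rw [hy, hy', hndef]
    simp [basePt, toV3, intCross]
    ring
  have hnR : |(n.1 : ℝ)| + |(n.2.1 : ℝ)| + |(n.2.2 : ℝ)| ≤ 3 := by exact_mod_cast hn
  have hb : |(n.1 : ℝ) * (y 0 - y' 0) + n.2.1 * (y 1 - y' 1) + n.2.2 * (y 2 - y' 2)|
      ≤ 18 / 1000 := by
    refine (abs_add_three _ _ _).trans ?_
    rw [abs_mul, abs_mul, abs_mul]
    have h0 := mul_le_mul_of_nonneg_left (hd 0) (abs_nonneg (n.1 : ℝ))
    have h1 := mul_le_mul_of_nonneg_left (hd 1) (abs_nonneg (n.2.1 : ℝ))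
    have h2 := mul_le_mul_of_nonneg_left (hd 2) (abs_nonneg (n.2.2 : ℝ))
    linarith
  rw [hkey, abs_mul, abs_of_pos (by norm_num : (0 : ℝ) < 23)] at hsep
  linarith

end
end
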